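/- Let K ⊆ ℝⁿ be a convex polytope with integral vertices, let F̄ be a nonzero Laurent polynomial in n variables over 𝔽_q with Δ(F̄) ⊆ K, and let F ∈ ℤ_q[x^±] be any Laurent polynomial whose coefficientwise reduction modulo p equals F̄ and with Δ(F) ⊆ K. Let r, λ, τ be positive integers satisfying τ·(p−1)·a·r ≥ λ. Let 𝔽_{q^r} := GaloisField p (a·r), fix any ring homomorphism ι : 𝔽_q → 𝔽_{q^r}, and let N be the number of points c = (c₁,…,cₙ) with each cᵢ ∈ 𝔽_{q^r}ˣ such that the Laurent polynomial obtained from F̄ by applying ι to its coefficients vanishes at c. For each 0 ≤ s ≤ λ+τ−1, let B_s := (sK) ∩ ℤⁿ, let M_s be the B_s × B_s matrix over ℤ_q with entries (M_s)_{v,u} = [F^{(p−1)s}]_{pv−u}, let Φ_s := φ^{a−1}(M_s)·φ^{a−2}(M_s)⋯φ(M_s)·M_s (φ acting entrywise), and let α_s := (−1)^s · Σ_{t=0}^{τ−1} (−1)^t · C(λ+t−1, t) · C(λ, s−t) ∈ ℤ, where C(λ, s−t) is taken to be 0 unless 0 ≤ s−t ≤ λ. Then, in ℤ_q, the difference N −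 (q^r−1)^n · Σ_{s=0}^{λ+τ−1} α_s · trace(Φ_s^r) lies in the ideal generated by p^λ. -/

import Mathlib

open WittVector

noncomputable section

variable (p : ℕ) [Fact p.Prime] (a n : ℕ)

/-- The finite field `𝔽_q` with `q = p^a` elements. -/
abbrev Fq := GaloisField p a

/-- The ring `ℤ_q` of `p`-typical Witt vectors of `𝔽_q`. -/
abbrev Zq := WittVector p (Fq p a)

/-- The Witt-vector Frobenius automorphism `φ` of `ℤ_q`. -/
def φW : Zq p a ≃+* Zq p a := WittVector.frobeniusEquiv p (Fq p a)

/-- The ring `ℤ_q[x^±]` of Laurent polynomials in `n` variables over `ℤ_q`. -/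
abbrev LP := AddMonoidAlgebra (Zq p a) (Fin n → ℤ)

/-- The map `φ` on Laurent polynomials: `φ(G) = Σ_u φ([G]_u) x^{pu}`. -/
def φL (G : LP p a n) : LP p a n :=
  Finsupp.sum G.coeff fun u c => AddMonoidAlgebra.single ((p : ℤ) • u) (φW p a c)

/-- The map `ψ` on Laurent polynomials: `ψ(G) = Σ_u φ⁻¹([G]_{pu}) x^u`. -/
def ψL (G : LP p a n) : LP p a n :=
  AddMonoidAlgebra.ofCoeff <| Finsupp.mapRange (φW p a).symm (map_zero _)
    (Finsupp.comapDomain (fun u : Fin n → ℤ => (p : ℤ) • u) G.coeff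
      ((smul_right_injective (Fin n → ℤ)
        (by exact_mod_cast (Fact.out : p.Prime).ne_zero)).injOn))

/-- The operator `A_H = ψ ∘ T_{H^{p-1}}`, where `T_H` is multiplication by `H`. -/
def A (H : LP p a n) (G : LP p a n) : LP p a n := ψL p a n (H ^ (p - 1) * G)


open scoped Pointwise

/-- The coordinatewise embedding of `ℤⁿ` into `ℝⁿ`. -/
def emb (n : ℕ) : (Fin n → ℤ) → (Fin n → ℝ) := fun u i => (u i : ℝ)

/-- The Newton polytope of a Laurent polynomial: the convex hull in `ℝⁿ` of its
set of exponents with nonzero coefficient. -/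
def newton {R : Type*} [CommSemiring R] {n : ℕ} (F : AddMonoidAlgebra R (Fin n → ℤ)) :
    Set (Fin n → ℝ) :=
  convexHull ℝ (emb n '' {u | F.coeff u ≠ 0})


/-- The matrix `M_s` with rows and columns indexed by `B = (sK) ∩ ℤⁿ`, given by
`(M_s)_{v,u} = [F^{(p−1)s}]_{pv−u}`. -/
def Ms (F : LP p a n) (s : ℕ) (B : Finset (Fin n → ℤ)) : Matrix B B (Zq p a) :=
  fun v u => (F ^ ((p - 1) * s)).coeff ((p : ℤ) • (v : Fin n → ℤ) - (u : Fin n → ℤ))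

/-- The matrix product `Φ_s = φ^{a−1}(M_s) ⋯ φ(M_s) · M_s`, where `φ` acts entrywise. -/
def Φmat (B : Finset (Fin n → ℤ)) (M : Matrix B B (Zq p a)) : Matrix B B (Zq p a) :=
  (((List.range a).reverse).map fun i => M.map fun x => (⇑(φW p a))^[i] x).prod

/-- Evaluation of the Laurent polynomial obtained from `F̄` by applying `ι` to its
coefficients at a point `c` of the torus. -/
def evalTorus (r : ℕ) (ι : Fq p a →+* GaloisField p (a * r))
    (Fbar : AddMonoidAlgebra (Fq p a) (Fin n → ℤ)) (c : Fin n → GaloisField p (a * r)) :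
    GaloisField p (a * r) :=
  Finsupp.sum Fbar.coeff fun u co => ι co * ∏ i, c i ^ u i

/-- The number `N` of points `c ∈ (𝔽_{q^r}ˣ)ⁿ` at which `F̄` (mapped via `ι`) vanishes. -/
def Npoints (r : ℕ) (ι : Fq p a →+* GaloisField p (a * r))
    (Fbar : AddMonoidAlgebra (Fq p a) (Fin n → ℤ)) : ℕ :=
  Nat.card {c : Fin n → GaloisField p (a * r) //
    (∀ i, c i ≠ 0) ∧ evalTorus p a n r ι Fbar c = 0}

/-- `α_s = (−1)^s Σ_{t=0}^{τ−1} (−1)^t C(λ+t−1, t) C(λ, s−t)`, with `C(λ, s−t) = 0`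
unless `0 ≤ s−t ≤ λ`. -/
def α (lam tau s : ℕ) : ℤ :=
  (-1) ^ s * ∑ t ∈ Finset.range tau,
    (-1) ^ t * ((lam + t - 1).choose t : ℤ) * (if t ≤ s then (lam.choose (s - t) : ℤ) else 0)

lemma aux_inner (R : Type*) [CommRing R] (lam tau t : ℕ) (ht : t < tau) (y : R) :
    ∑ s ∈ Finset.range (lam + tau), (-1 : R) ^ s * (-1) ^ t *
      (if t ≤ s then (lam.choose (s - t) : R) else 0) * y ^ s = y ^ t * (1 - y) ^ lam := by
  obtain ⟨d, rfl⟩ := Nat.exists_eq_add_of_lt ht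
  have e : lam + (t + d + 1) = t + (lam + 1 + d) := by ring
  rw [e, Finset.sum_range_add]
  have h0 : ∑ x ∈ Finset.range t, (-1 : R) ^ x * (-1) ^ t *
      (if t ≤ x then (lam.choose (x - t) : R) else 0) * y ^ x = 0 := by
    apply Finset.sum_eq_zero
    intro x hx
    rw [if_neg (by simpa using hx)]
    ring
  rw [h0, zero_add, Finset.sum_range_add]
  have h1 : ∑ x ∈ Finset.range d, (-1 : R) ^ (t + (lam + 1 + x)) * (-1) ^ t *
      (if t ≤ t + (lam + 1 + x) then (lam.choose (t + (lam + 1 + x) - t) : R) else 0)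
        * y ^ (t + (lam + 1 + x)) = 0 := by
    apply Finset.sum_eq_zero
    intro x hx
    rw [if_pos (by omega), Nat.choose_eq_zero_of_lt (by omega)]
    simp
  rw [h1, add_zero, sub_eq_add_neg, add_comm (1 : R), add_pow, Finset.mul_sum]
  apply Finset.sum_congr rfl
  intro j hj
  rw [if_pos (by omega), Nat.add_sub_cancel_left, neg_pow y]
  have : (-1 : R) ^ t * (-1) ^ t = 1 := by rw [← mul_pow]; simp
  simp only [pow_add, one_pow]
  linear_combination ((-1) ^ j * (lam.choose j : R) * y ^ t * y ^ j) * this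

lemma alpha_sum (R : Type*) [CommRing R] (lam tau : ℕ) (y : R) :
    ∑ s ∈ Finset.range (lam + tau), (α lam tau s : R) * y ^ s =
      (1 - y) ^ lam * ∑ t ∈ Finset.range tau, ((lam + t - 1).choose t : R) * y ^ t := by
  simp only [α]
  push_cast
  simp only [Finset.mul_sum, Finset.sum_mul]
  rw [Finset.sum_comm]
  apply Finset.sum_congr rfl
  intro t ht
  have := aux_inner R lam tau t (by simpa using ht) y
  calc _ = ((lam + t - 1).choose t : R) * ∑ s ∈ Finset.range (lam + tau), (-1 : R) ^ s * (-1) ^ t *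
      (if t ≤ s then (lam.choose (s - t) : R) else 0) * y ^ s := by
        rw [Finset.mul_sum]
        apply Finset.sum_congr rfl
        intro s _
        ring
    _ = _ := by rw [this]; ring

open PowerSeries in
lemma trunc_dvd (lam tau : ℕ) (hlam : 1 ≤ lam) :
    (Polynomial.X ^ tau : Polynomial ℤ) ∣
      (1 - Polynomial.X) ^ lam *
        ∑ t ∈ Finset.range tau, Polynomial.C ((lam + t - 1).choose t : ℤ) * Polynomial.X ^ t - 1 := by
  obtain ⟨d, rfl⟩ := Nat.exists_eq_add_of_le' hlam
  set T : Polynomial ℤ := ∑ t ∈ Finset.range tau,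
    Polynomial.C ((d + 1 + t - 1).choose t : ℤ) * Polynomial.X ^ t with hT
  have hdvd : (PowerSeries.X ^ tau : ℤ⟦X⟧) ∣ (T : ℤ⟦X⟧) - (mk fun n ↦ (Nat.choose (d + n) d : ℤ)) := by
    rw [PowerSeries.X_pow_dvd_iff]
    intro m hm
    rw [map_sub, Polynomial.coeff_coe, hT, Polynomial.finsetSum_coeff]
    simp only [Polynomial.coeff_C_mul_X_pow]
    rw [Finset.sum_ite_eq, if_pos (by simpa using hm)]
    rw [show d + 1 + m - 1 = d + m by omega, PowerSeries.coeff_mk, Nat.choose_symm_add, sub_self]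
  have h2 : (PowerSeries.X ^ tau : ℤ⟦X⟧) ∣
      (((1 - Polynomial.X) ^ (d + 1) * T - 1 : Polynomial ℤ) : ℤ⟦X⟧) := by
    have e := mk_add_choose_mul_one_sub_pow_eq_one ℤ d
    have : (((1 - Polynomial.X) ^ (d + 1) * T - 1 : Polynomial ℤ) : ℤ⟦X⟧) =
      ((T : ℤ⟦X⟧) - (mk fun n ↦ (Nat.choose (d + n) d : ℤ))) * (1 - X) ^ (d + 1) := by
      push_cast
      linear_combination e
    rw [this]
    exact hdvd.mul_right _
  rw [PowerSeries.X_pow_dvd_iff] at h2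
  rw [Polynomial.X_pow_dvd_iff]
  intro m hm
  have := h2 m hm
  rwa [Polynomial.coeff_coe] at this

lemma alpha_sum_sub_one_dvd (R : Type*) [CommRing R] (lam tau : ℕ) (hlam : 1 ≤ lam) (y : R) :
    y ^ tau ∣ ∑ s ∈ Finset.range (lam + tau), (α lam tau s : R) * y ^ s - 1 := by
  rw [alpha_sum]
  have := map_dvd (Polynomial.aeval (R := ℤ) y) (trunc_dvd lam tau hlam)
  simpa [map_sum] using this

/-- Iterated Frobenius on coefficients as a ring homomorphism. -/
def frobPow (i : ℕ) : Zq p a →+* Zq p a := ((φW p a : Zq p a ≃+* Zq p a) : Zq p a →+* Zq p a) ^ i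

lemma frobPow_apply (i : ℕ) (x : Zq p a) : frobPow p a i x = (⇑(φW p a))^[i] x := by
  simp [frobPow, RingHom.coe_pow]

lemma frobPow_coeff (i : ℕ) (x : Zq p a) (k : ℕ) :
    (frobPow p a i x).coeff k = (x.coeff k) ^ p ^ i := by
  rw [frobPow_apply]
  exact WittVector.iterate_frobenius_coeff x i k

/-- The `i`-th iterate of `φL`, as a ring homomorphism. -/
def sig (i : ℕ) : LP p a n →+* LP p a n :=
  (AddMonoidAlgebra.mapDomainRingHom (Zq p a)
    (zsmulAddGroupHom ((p : ℤ) ^ i) : (Fin n → ℤ) →+ (Fin n → ℤ))).comp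
    (AddMonoidAlgebra.mapRingHom (Fin n → ℤ) (frobPow p a i))

lemma sig_single (i : ℕ) (z : Fin n → ℤ) (c : Zq p a) :
    sig p a n i (AddMonoidAlgebra.single z c) =
      AddMonoidAlgebra.single (((p : ℤ) ^ i) • z) (frobPow p a i c) := by
  simp [sig]

lemma sig_eq (i : ℕ) (H : LP p a n) :
    sig p a n i H = ∑ z ∈ H.coeff.support,
      AddMonoidAlgebra.single (((p : ℤ) ^ i) • z) (frobPow p a i (H.coeff z)) := by
  conv_lhs => rw [← AddMonoidAlgebra.sum_coeff_single H]
  rw [Finsupp.sum, map_sum]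
  simp only [sig_single]

lemma coeff_mul_sig (i : ℕ) (G H : LP p a n) (N : Fin n → ℤ) :
    (G * sig p a n i H).coeff N = ∑ z ∈ H.coeff.support,
      G.coeff (N - ((p : ℤ) ^ i) • z) * frobPow p a i (H.coeff z) := by
  rw [sig_eq, Finset.mul_sum, AddMonoidAlgebra.coeff_sum, Finsupp.finsetSum_apply]
  apply Finset.sum_congr rfl
  intro z _
  rw [AddMonoidAlgebra.coeff_mul_single_eq_coeff_mul]
  intro m _
  exact eq_sub_iff_add_eq.symm

/-- `H · φ(H) ⋯ φ^{m-1}(H)`. -/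
def PP (H : LP p a n) (m : ℕ) : LP p a n := ∏ i ∈ Finset.range m, sig p a n i H

/-- The support of `G` lies in `tK`. -/
def InK (K : Set (Fin n → ℝ)) (t : ℝ) (G : LP p a n) : Prop :=
  ∀ u, G.coeff u ≠ 0 → emb n u ∈ t • K

lemma emb_add (u v : Fin n → ℤ) : emb n (u + v) = emb n u + emb n v := by
  ext i; simp [emb]

lemma emb_zsmul (k : ℤ) (u : Fin n → ℤ) : emb n (k • u) = (k : ℝ) • emb n u := by
  ext i; simp [emb]

variable {p a n}

lemma InK.mul {K : Set (Fin n → ℝ)} (hK : Convex ℝ K) {t s : ℝ} (ht : 0 ≤ t) (hs : 0 ≤ s)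
    {G H : LP p a n} (hG : InK p a n K t G) (hH : InK p a n K s H) :
    InK p a n K (t + s) (G * H) := by
  classical
  intro u hu
  rw [AddMonoidAlgebra.coeff_mul] at hu
  obtain ⟨v, hv, hv'⟩ := Finset.exists_ne_zero_of_sum_ne_zero hu
  obtain ⟨w, hw, hw'⟩ := Finset.exists_ne_zero_of_sum_ne_zero hv'
  have hvw : v + w = u := by
    by_contra h
    exact hw' (if_neg h)
  subst hvw
  rw [hK.add_smul ht hs, emb_add]
  exact Set.add_mem_add (hG v (Finsupp.mem_support_iff.1 hv)) (hH w (Finsupp.mem_support_iff.1 hw))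

lemma InK.one {K : Set (Fin n → ℝ)} (hK : K.Nonempty) : InK p a n K 0 1 := by
  intro u hu
  have : u = 0 := by
    by_contra h
    apply hu
    rw [AddMonoidAlgebra.one_def, AddMonoidAlgebra.coeff_single, Finsupp.single_apply, if_neg (Ne.symm h)]
  subst this
  obtain ⟨x, hx⟩ := hK
  refine ⟨x, hx, ?_⟩
  ext i; simp [emb]

lemma InK.pow {K : Set (Fin n → ℝ)} (hK : Convex ℝ K) (hne : K.Nonempty) {t : ℝ} (ht : 0 ≤ t)
    {G : LP p a n} (hG : InK p a n K t G) (k : ℕ) : InK p a n K (k * t) (G ^ k) := by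
  induction k with
  | zero => simpa using InK.one hne
  | succ k ih =>
    rw [pow_succ]
    have := InK.mul hK (by positivity) ht ih hG
    convert this using 1
    push_cast; ring

lemma InK.sig {K : Set (Fin n → ℝ)} {t : ℝ}
    {G : LP p a n} (hG : InK p a n K t G) (i : ℕ) : InK p a n K (p ^ i * t) (sig p a n i G) := by
  intro u hu
  rw [sig_eq, AddMonoidAlgebra.coeff_sum, Finsupp.finsetSum_apply] at hu
  obtain ⟨z, hz, hz'⟩ := Finset.exists_ne_zero_of_sum_ne_zero hu
  rw [AddMonoidAlgebra.coeff_single, Finsupp.single_apply] at hz'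
  have hzu : ((p : ℤ) ^ i) • z = u := by
    by_contra h
    exact hz' (if_neg h)
  rw [← hzu, emb_zsmul, mul_smul]
  push_cast
  exact Set.smul_mem_smul_set (hG z (Finsupp.mem_support_iff.1 hz))

lemma InK.PP {K : Set (Fin n → ℝ)} (hK : Convex ℝ K) (hne : K.Nonempty) {s : ℕ}
    {H : LP p a n} (hH : InK p a n K (((p - 1) * s : ℕ) : ℝ) H) (m : ℕ) :
    InK p a n K ((p ^ m - 1) * s) (PP p a n H m) := by
  have hp : 1 ≤ p := (Fact.out : p.Prime).one_le
  have hp' : (1 : ℝ) ≤ p := by exact_mod_cast hp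
  induction m with
  | zero => simpa [_root_.PP] using InK.one hne
  | succ m ih =>
    have e : _root_.PP p a n H (m + 1) = _root_.PP p a n H m * _root_.sig p a n m H :=
      Finset.prod_range_succ _ _
    rw [e]
    have h1 : (1 : ℝ) ≤ p ^ m := one_le_pow₀ hp'
    have := InK.mul hK (mul_nonneg (by linarith) (by positivity)) (by positivity) ih (hH.sig m)
    convert this using 1
    push_cast [hp]
    ring

lemma mem_of_coeff {K : Set (Fin n → ℝ)} (hK : Convex ℝ K) (hne : K.Nonempty) {s : ℕ}
    {H : LP p a n} (hH : InK p a n K (((p - 1) * s : ℕ) : ℝ) H) (m : ℕ)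
    (w u : Fin n → ℤ) (hu : emb n u ∈ (s : ℝ) • K)
    (h : (PP p a n H m).coeff (((p : ℤ) ^ m) • w - u) ≠ 0) : emb n w ∈ (s : ℝ) • K := by
  have hp : 1 ≤ p := (Fact.out : p.Prime).one_le
  have hp' : (1 : ℝ) ≤ p := by exact_mod_cast hp
  have h1 : (1 : ℝ) ≤ p ^ m := one_le_pow₀ hp'
  have h2 := InK.PP hK hne hH m _ h
  have h3 : emb n (((p : ℤ) ^ m) • w) ∈ (((p : ℝ) ^ m - 1) * s + s) • K := by
    rw [hK.add_smul (mul_nonneg (by linarith) (by positivity)) (by positivity)]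
    have := Set.add_mem_add h2 hu
    rwa [← emb_add, sub_add_cancel] at this
  rw [emb_zsmul, show ((p : ℝ) ^ m - 1) * s + s = p ^ m * s by ring, mul_smul] at h3
  push_cast at h3
  exact (Set.smul_mem_smul_set_iff₀ (by positivity) _ _).1 h3

/-- Partial products of the twisted matrix. -/
def EE {B : Finset (Fin n → ℤ)} (M : Matrix B B (Zq p a)) : ℕ → Matrix B B (Zq p a)
  | 0 => 1
  | m + 1 => (M.map fun x => (⇑(φW p a))^[m] x) * EE M m

lemma Φmat_eq {B : Finset (Fin n → ℤ)} (M : Matrix B B (Zq p a)) : Φmat p a n B M = EE M a := by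
  have : ∀ m : ℕ, (((List.range m).reverse).map fun i => M.map fun x => (⇑(φW p a))^[i] x).prod
      = EE M m := by
    intro m
    induction m with
    | zero => rfl
    | succ m ih => simp [List.range_succ, EE, ← ih]
  exact this a

lemma frob_a (ha : 1 ≤ a) (x : Zq p a) : (⇑(φW p a))^[a] x = x := by
  ext k
  rw [← frobPow_apply, frobPow_coeff]
  have : Fintype (GaloisField p a) := Fintype.ofFinite _
  have hc : Fintype.card (GaloisField p a) = p ^ a := by
    rw [← Nat.card_eq_fintype_card, GaloisField.card p a (by omega)]
  rw [← hc, FiniteField.pow_card]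

lemma EE_add (ha : 1 ≤ a) {B : Finset (Fin n → ℤ)} (M : Matrix B B (Zq p a)) (j i : ℕ) :
    EE M (a * j + i) = EE M i * EE M (a * j) := by
  induction i with
  | zero => simp [EE]
  | succ i ih =>
    rw [← add_assoc, EE, EE, ih, mul_assoc]
    congr 2
    ext x : 1
    rw [add_comm, Function.iterate_add_apply, Function.iterate_mul]
    congr 1
    exact Function.iterate_fixed (frob_a ha x) j

lemma Φmat_pow (ha : 1 ≤ a) {B : Finset (Fin n → ℤ)} (M : Matrix B B (Zq p a)) (r : ℕ) :
    Φmat p a n B M ^ r = EE M (a * r) := by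
  rw [Φmat_eq]
  induction r with
  | zero => simp [EE]
  | succ r ih => rw [mul_add, mul_one, EE_add ha, pow_succ', ih]

lemma EE_entry {K : Set (Fin n → ℝ)} (hK : Convex ℝ K) (hne : K.Nonempty) {s : ℕ}
    {H : LP p a n} (hH : InK p a n K (((p - 1) * s : ℕ) : ℝ) H)
    (B : Finset (Fin n → ℤ)) (hB : ∀ u, u ∈ B ↔ emb n u ∈ (s : ℝ) • K)
    (M : Matrix B B (Zq p a))
    (hM : ∀ v u, M v u = H.coeff ((p : ℤ) • (v : Fin n → ℤ) - (u : Fin n → ℤ)))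
    (m : ℕ) (v u : B) :
    EE M m v u = (PP p a n H m).coeff (((p : ℤ) ^ m) • (v : Fin n → ℤ) - (u : Fin n → ℤ)) := by
  induction m generalizing v u with
  | zero =>
    simp only [EE, _root_.PP, Finset.range_zero, Finset.prod_empty, pow_zero, one_smul,
      AddMonoidAlgebra.one_def, AddMonoidAlgebra.coeff_single, Finsupp.single_apply, Matrix.one_apply]
    congr 1
    rw [eq_comm (a := (0 : Fin n → ℤ)), sub_eq_zero, Subtype.ext_iff]
  | succ m ih =>
    rw [EE, Matrix.mul_apply, _root_.PP, Finset.prod_range_succ, coeff_mul_sig]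
    change _ = ∑ z ∈ H.coeff.support, (_root_.PP p a n H m).coeff _ * _
    let g : (Fin n → ℤ) → Zq p a := fun w =>
      (PP p a n H m).coeff (((p : ℤ) ^ m) • w - u) *
        frobPow p a m (H.coeff ((p : ℤ) • (v : Fin n → ℤ) - w))
    have h1 : ∑ w : B, (M.map fun x => (⇑(φW p a))^[m] x) v w * EE M m w u = ∑ᶠ w, g w := by
      rw [finsum_eq_sum_of_support_subset (s := B), ← Finset.sum_coe_sort B g]
      · apply Finset.sum_congr rfl
        intro w _
        rw [Matrix.map_apply, hM, ih, ← frobPow_apply, mul_comm]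
      · intro w hw
        rw [Finset.mem_coe, hB]
        exact mem_of_coeff hK hne hH m w u ((hB _).1 u.2) (left_ne_zero_of_mul hw)
    rw [h1, ← finsum_comp_equiv (Equiv.subLeft ((p : ℤ) • (v : Fin n → ℤ))),
      finsum_eq_sum_of_support_subset (s := H.coeff.support)]
    · apply Finset.sum_congr rfl
      intro z _
      simp only [g, Equiv.subLeft_apply, sub_sub_cancel]
      congr 2
      rw [smul_sub, smul_smul, ← pow_succ]
      abel
    · intro z hz
      have := right_ne_zero_of_mul hz
      simp only [Equiv.subLeft_apply, sub_sub_cancel] at this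
      rw [Finset.mem_coe, Finsupp.mem_support_iff]
      intro h0
      rw [h0, map_zero] at this
      exact this rfl

lemma trace_EE {K : Set (Fin n → ℝ)} (hK : Convex ℝ K) (hne : K.Nonempty) {s : ℕ}
    {H : LP p a n} (hH : InK p a n K (((p - 1) * s : ℕ) : ℝ) H)
    (B : Finset (Fin n → ℤ)) (hB : ∀ u, u ∈ B ↔ emb n u ∈ (s : ℝ) • K)
    (M : Matrix B B (Zq p a))
    (hM : ∀ v u, M v u = H.coeff ((p : ℤ) • (v : Fin n → ℤ) - (u : Fin n → ℤ)))
    (m : ℕ) :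
    (EE M m).trace = ∑ u ∈ B, (PP p a n H m).coeff (((p : ℤ) ^ m - 1) • u) := by
  rw [Matrix.trace, ← Finset.sum_coe_sort B]
  apply Finset.sum_congr rfl
  intro u _
  rw [Matrix.diag_apply, EE_entry hK hne hH B hB M hM, sub_smul, one_smul]


section evaluation

variable {r : ℕ} (ι : Fq p a →+* GaloisField p (a * r))

/-- The Teichmüller lift of a unit. -/
def teichU (x : (GaloisField p (a * r))ˣ) : (Zq p (a * r))ˣ :=
  Units.map (WittVector.teichmuller p : GaloisField p (a * r) →* Zq p (a * r)) x

/-- The monomial character, as a monoid homomorphism in the exponent. -/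
def chi (c : Fin n → (GaloisField p (a * r))ˣ) : Multiplicative (Fin n → ℤ) →* (Zq p (a * r))ˣ where
  toFun u := ∏ i, teichU (c i) ^ (Multiplicative.toAdd u i)
  map_one' := by simp
  map_mul' u v := by simp [zpow_add, Finset.prod_mul_distrib]

/-- Evaluation at the Teichmüller lift of `c`. -/
def ev (c : Fin n → (GaloisField p (a * r))ˣ) : LP p a n →+* Zq p (a * r) :=
  AddMonoidAlgebra.liftNCRingHom (WittVector.map ι) ((Units.coeHom _).comp (chi c))
    (fun _ _ => Commute.all _ _)

lemma ev_single (c : Fin n → (GaloisField p (a * r))ˣ) (u : Fin n → ℤ) (x : Zq p a) :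
    ev ι c (AddMonoidAlgebra.single u x) =
      WittVector.map ι x * (chi c (Multiplicative.ofAdd u) : (Zq p (a * r))ˣ) := by
  simp [ev]

lemma ev_eq (c : Fin n → (GaloisField p (a * r))ˣ) (G : LP p a n) :
    ev ι c G = ∑ z ∈ G.coeff.support, WittVector.map ι (G.coeff z) *
      (chi c (Multiplicative.ofAdd z) : (Zq p (a * r))ˣ) := by
  conv_lhs => rw [← AddMonoidAlgebra.sum_coeff_single G]
  rw [Finsupp.sum, map_sum]
  simp only [ev_single]

lemma frobPow_teich (i : ℕ) (x : (GaloisField p (a * r))ˣ) :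
    Units.map (frobPow p (a * r) i : Zq p (a * r) →* Zq p (a * r)) (teichU x)
      = teichU x ^ p ^ i := by
  rw [teichU, ← map_pow]
  ext1
  simp only [Units.coe_map, MonoidHom.coe_coe, Units.val_pow_eq_pow_val]
  ext k
  rw [frobPow_coeff]
  rcases Nat.eq_zero_or_pos k with rfl | hk
  · rw [WittVector.teichmuller_coeff_zero, WittVector.teichmuller_coeff_zero]
  · rw [WittVector.teichmuller_coeff_pos _ _ _ hk, WittVector.teichmuller_coeff_pos _ _ _ hk,
      zero_pow (pow_ne_zero _ (Fact.out : p.Prime).ne_zero)]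

lemma frobPow_chi (i : ℕ) (c : Fin n → (GaloisField p (a * r))ˣ) (u : Fin n → ℤ) :
    frobPow p (a * r) i (chi c (Multiplicative.ofAdd u) : (Zq p (a * r))ˣ) =
      (chi c (Multiplicative.ofAdd (((p : ℤ) ^ i) • u)) : (Zq p (a * r))ˣ) := by
  have : Units.map (frobPow p (a * r) i : Zq p (a * r) →* Zq p (a * r))
      (chi c (Multiplicative.ofAdd u)) = chi c (Multiplicative.ofAdd (((p : ℤ) ^ i) • u)) := by
    simp only [chi, MonoidHom.coe_mk, OneHom.coe_mk, toAdd_ofAdd]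
    rw [map_prod]
    apply Finset.prod_congr rfl
    intro j _
    rw [map_zpow, frobPow_teich, Pi.smul_apply, smul_eq_mul, zpow_mul]
    congr 1
  exact congrArg Units.val this

lemma frobPow_map (i : ℕ) (x : Zq p a) :
    frobPow p (a * r) i (WittVector.map ι x) = WittVector.map ι (frobPow p a i x) := by
  ext k
  rw [frobPow_coeff, WittVector.map_coeff, WittVector.map_coeff, frobPow_coeff, map_pow]

lemma ev_sig (i : ℕ) (c : Fin n → (GaloisField p (a * r))ˣ) (H : LP p a n) :
    ev ι c (sig p a n i H) = frobPow p (a * r) i (ev ι c H) := by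
  rw [sig_eq, ev_eq ι c H, map_sum, map_sum]
  apply Finset.sum_congr rfl
  intro z _
  rw [ev_single, map_mul, frobPow_chi, frobPow_map]

lemma ev_PP (m : ℕ) (c : Fin n → (GaloisField p (a * r))ˣ) (H : LP p a n) :
    ev ι c (PP p a n H m) = ∏ i ∈ Finset.range m, frobPow p (a * r) i (ev ι c H) := by
  rw [PP, map_prod]
  simp only [ev_sig]

lemma card_k (har : a * r ≠ 0) [Fintype (GaloisField p (a * r))] :
    Fintype.card (GaloisField p (a * r)) = p ^ (a * r) := by
  rw [← Nat.card_eq_fintype_card, GaloisField.card p _ har]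

lemma constCoeff_teichU (x : (GaloisField p (a * r))ˣ) :
    Units.map ((WittVector.constantCoeff : Zq p (a * r) →+* _) : Zq p (a * r) →* _) (teichU x)
      = x := by
  ext1
  simp only [Units.coe_map, MonoidHom.coe_coe, teichU]
  exact WittVector.teichmuller_coeff_zero p _

lemma constCoeff_chi (c : Fin n → (GaloisField p (a * r))ˣ) (u : Fin n → ℤ) :
    Units.map ((WittVector.constantCoeff : Zq p (a * r) →+* _) : Zq p (a * r) →* _)
      (chi c (Multiplicative.ofAdd u)) = ∏ i, c i ^ u i := by
  simp only [chi, MonoidHom.coe_mk, OneHom.coe_mk, toAdd_ofAdd]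
  rw [map_prod]
  apply Finset.prod_congr rfl
  intro j _
  rw [map_zpow, constCoeff_teichU]

lemma sum_chi (har : a * r ≠ 0) [Fintype (GaloisField p (a * r))]
    [Fintype (GaloisField p (a * r))ˣ] (u : Fin n → ℤ)
    [Decidable (∃ z : Fin n → ℤ, u = ((p : ℤ) ^ (a * r) - 1) • z)] :
    ∑ c : Fin n → (GaloisField p (a * r))ˣ,
      ((chi c (Multiplicative.ofAdd u) : (Zq p (a * r))ˣ) : Zq p (a * r)) =
      if ∃ z : Fin n → ℤ, u = ((p : ℤ) ^ (a * r) - 1) • z then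
        ((p ^ (a * r) - 1 : ℕ) : Zq p (a * r)) ^ n else 0 := by
  classical
  have hcard : Fintype.card (GaloisField p (a * r))ˣ = p ^ (a * r) - 1 := by
    rw [← Nat.card_eq_fintype_card, Nat.card_units, GaloisField.card p _ har]
  have hpos : 1 ≤ p ^ (a * r) := Nat.one_le_pow _ _ (Fact.out : p.Prime).pos
  have hcast : ((p ^ (a * r) - 1 : ℕ) : ℤ) = (p : ℤ) ^ (a * r) - 1 := by push_cast [hpos]; rfl
  let f : (Fin n → (GaloisField p (a * r))ˣ) →* Zq p (a * r) :=
    { toFun := fun c => (chi c (Multiplicative.ofAdd u) : (Zq p (a * r))ˣ)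
      map_one' := by simp [chi, teichU]
      map_mul' := fun c d => by
        rw [← Units.val_mul]
        congr 1
        simp only [chi, MonoidHom.coe_mk, OneHom.coe_mk, toAdd_ofAdd, teichU, Pi.mul_apply,
          map_mul, mul_zpow, Finset.prod_mul_distrib] }
  have hs := sum_hom_units f
  have hcard2 : Fintype.card (Fin n → (GaloisField p (a * r))ˣ) = (p ^ (a * r) - 1) ^ n := by
    rw [Fintype.card_fun, hcard, Fintype.card_fin]
  have hiff : f = 1 ↔ ∃ z : Fin n → ℤ, u = ((p : ℤ) ^ (a * r) - 1) • z := by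
    constructor
    · intro hf
      obtain ⟨g, hg⟩ := IsCyclic.exists_generator (α := (GaloisField p (a * r))ˣ)
      have hord : orderOf g = p ^ (a * r) - 1 := by
        rw [orderOf_eq_card_of_forall_mem_zpowers hg, Nat.card_eq_fintype_card, hcard]
      have hdvd : ∀ i, ((p : ℤ) ^ (a * r) - 1) ∣ u i := by
        intro i
        have h1 : chi (Pi.mulSingle i g) (Multiplicative.ofAdd u) = 1 := by
          ext1
          exact DFunLike.congr_fun hf (Pi.mulSingle i g)
        have h2 := constCoeff_chi (Pi.mulSingle i g) u
        rw [h1, map_one, Finset.prod_eq_single i] at h2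
        · rw [Pi.mulSingle_eq_same] at h2
          rw [← hcast, ← hord, orderOf_dvd_iff_zpow_eq_one]
          exact h2.symm
        · intro j _ hj
          rw [Pi.mulSingle_eq_of_ne hj, one_zpow]
        · simp
      choose z hz using hdvd
      exact ⟨z, funext hz⟩
    · rintro ⟨z, rfl⟩
      refine MonoidHom.ext fun c => ?_
      change ((chi c _ : (Zq p (a * r))ˣ) : Zq p (a * r)) = 1
      rw [Units.val_eq_one]
      simp only [chi, MonoidHom.coe_mk, OneHom.coe_mk, toAdd_ofAdd]
      apply Finset.prod_eq_one
      intro i _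
      rw [Pi.smul_apply, smul_eq_mul, zpow_mul, ← hcast, zpow_natCast, teichU, ← map_pow, ← hcard,
        pow_card_eq_one, map_one, one_zpow]
  calc _ = ∑ c, f c := rfl
    _ = _ := by
      rw [hs, hcard2]
      simp only [hiff]
      split_ifs <;> simp

lemma sum_ev (har : a * r ≠ 0) [Fintype (GaloisField p (a * r))]
    [Fintype (GaloisField p (a * r))ˣ] (G : LP p a n) (B : Finset (Fin n → ℤ))
    (hB : ∀ u, G.coeff (((p : ℤ) ^ (a * r) - 1) • u) ≠ 0 → u ∈ B) :
    ∑ c : Fin n → (GaloisField p (a * r))ˣ, ev ι c G =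
      ((p ^ (a * r) - 1 : ℕ) : Zq p (a * r)) ^ n *
        WittVector.map ι (∑ u ∈ B, G.coeff (((p : ℤ) ^ (a * r) - 1) • u)) := by
  classical
  simp only [ev_eq]
  rw [Finset.sum_comm]
  simp only [← Finset.mul_sum, sum_chi har]
  have hne : ((p : ℤ) ^ (a * r) - 1) ≠ 0 := by
    have h1 : (1 : ℤ) < (p : ℤ) ^ (a * r) :=
      one_lt_pow₀ (by exact_mod_cast (Fact.out : p.Prime).one_lt) har
    omega
  have hinj : Function.Injective (fun u : Fin n → ℤ => ((p : ℤ) ^ (a * r) - 1) • u) :=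
    smul_right_injective _ hne
  rw [map_sum, Finset.mul_sum]
  symm
  let g : (Fin n → ℤ) → Zq p (a * r) := fun z => WittVector.map ι (G.coeff z) *
      if ∃ y : Fin n → ℤ, z = ((p : ℤ) ^ (a * r) - 1) • y then
        ((p ^ (a * r) - 1 : ℕ) : Zq p (a * r)) ^ n else 0
  have h1 : ∑ z ∈ G.coeff.support, g z = ∑ z ∈ G.coeff.support ∪
      B.image (fun u : Fin n → ℤ => ((p : ℤ) ^ (a * r) - 1) • u), g z := by
    apply Finset.sum_subset Finset.subset_union_left
    intro z _ hz
    simp only [g]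
    rw [Finsupp.notMem_support_iff.1 hz, map_zero, zero_mul]
  change _ = ∑ z ∈ G.coeff.support, g z
  rw [h1]
  apply Finset.sum_of_injOn (fun u : Fin n → ℤ => ((p : ℤ) ^ (a * r) - 1) • u) hinj.injOn
  · intro u hu
    rw [Finset.mem_coe]
    exact Finset.mem_union_right _ (Finset.mem_image_of_mem _ hu)
  · intro z _ hz
    by_contra h
    have h2 := right_ne_zero_of_mul h
    have h3 := left_ne_zero_of_mul h
    have h4 : ∃ y : Fin n → ℤ, z = ((p : ℤ) ^ (a * r) - 1) • y := by
      by_contra h'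
      exact h2 (if_neg h')
    obtain ⟨y, rfl⟩ := h4
    apply hz
    refine ⟨y, Finset.mem_coe.2 (hB y ?_), rfl⟩
    intro h0
    rw [h0, map_zero] at h3
    exact h3 rfl
  · intro u _
    simp only [g]
    rw [if_pos ⟨u, rfl⟩]
    exact mul_comm _ _

lemma constCoeff_ev (c : Fin n → (GaloisField p (a * r))ˣ) (F : LP p a n)
    (Fbar : AddMonoidAlgebra (Fq p a) (Fin n → ℤ))
    (hlift : ∀ u : Fin n → ℤ, (F.coeff u).coeff 0 = Fbar.coeff u) :
    (ev ι c F).coeff 0 = evalTorus p a n r ι Fbar (fun i => (c i : GaloisField p (a * r))) := by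
  change WittVector.constantCoeff (ev ι c F) = _
  have hsub : Fbar.coeff.support ⊆ F.coeff.support := by
    intro u hu
    rw [Finsupp.mem_support_iff] at hu ⊢
    intro h0
    apply hu
    rw [← hlift, h0, WittVector.zero_coeff]
  rw [evalTorus, Finsupp.sum_of_support_subset _ hsub _ (by simp), ev_eq, map_sum]
  apply Finset.sum_congr rfl
  intro u _
  rw [map_mul]
  congr 1
  · change (WittVector.map ι (F.coeff u)).coeff 0 = _
    rw [WittVector.map_coeff, hlift]
  · have := congrArg Units.val (constCoeff_chi c u)
    simpa using this

lemma Npoints_eq [Fintype (GaloisField p (a * r))ˣ]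
    (Fbar : AddMonoidAlgebra (Fq p a) (Fin n → ℤ))
    [DecidablePred fun c : Fin n → (GaloisField p (a * r))ˣ =>
      evalTorus p a n r ι Fbar (fun i => (c i : GaloisField p (a * r))) = 0] :
    Npoints p a n r ι Fbar = ∑ c : Fin n → (GaloisField p (a * r))ˣ,
      if evalTorus p a n r ι Fbar (fun i => (c i : GaloisField p (a * r))) = 0 then 1 else 0 := by
  rw [← Finset.card_filter, Npoints, ← Fintype.card_subtype, ← Nat.card_eq_fintype_card]
  refine Nat.card_congr
    { toFun := fun c => ⟨fun i => Units.mk0 (c.1 i) (c.2.1 i), by simpa using c.2.2⟩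
      invFun := fun c => ⟨fun i => (c.1 i : GaloisField p (a * r)), fun i => (c.1 i).ne_zero, c.2⟩
      left_inv := fun c => by ext; simp
      right_inv := fun c => by ext; simp }

end evaluation

lemma y_dvd {m : ℕ} (lam tau : ℕ) (hlam : 1 ≤ lam) (har : m ≠ 0)
    (hbound : lam ≤ tau * (p - 1) * m) (x : Zq p m) [Decidable (x.coeff 0 = 0)] :
    (p : Zq p m) ^ lam ∣ (if x.coeff 0 = 0 then 1 else 0) -
      ∑ s ∈ Finset.range (lam + tau), (α lam tau s : Zq p m) *
        (∏ i ∈ Finset.range m, frobPow p m i x ^ (p - 1)) ^ s := by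
  have hp : 1 ≤ p := (Fact.out : p.Prime).one_le
  set y := ∏ i ∈ Finset.range m, frobPow p m i x ^ (p - 1) with hy
  split_ifs with h
  · rw [← dvd_neg, neg_sub]
    refine dvd_trans ?_ (alpha_sum_sub_one_dvd _ lam tau hlam y)
    rw [← WittVector.mem_span_p_iff_coeff_zero_eq_zero, Ideal.mem_span_singleton] at h
    have h1 : ((p : Zq p m) ^ (p - 1)) ^ m ∣ y := by
      rw [hy]
      have : ((p : Zq p m) ^ (p - 1)) ^ m = ∏ i ∈ Finset.range m, (p : Zq p m) ^ (p - 1) := by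
        simp
      rw [this]
      apply Finset.prod_dvd_prod_of_dvd
      intro i _
      apply pow_dvd_pow_of_dvd
      have := map_dvd (frobPow p m i) h
      rwa [map_natCast] at this
    refine dvd_trans ?_ (pow_dvd_pow_of_dvd h1 tau)
    rw [← pow_mul, ← pow_mul]
    apply pow_dvd_pow
    calc lam ≤ _ := hbound
      _ = _ := by ring
  · rw [zero_sub, dvd_neg, alpha_sum]
    apply Dvd.dvd.mul_right
    apply pow_dvd_pow_of_dvd
    rw [← Ideal.mem_span_singleton, WittVector.mem_span_p_iff_coeff_zero_eq_zero]
    change WittVector.constantCoeff (1 - y) = 0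
    rw [map_sub, map_one, sub_eq_zero, hy, map_prod]
    have e : ∀ i, WittVector.constantCoeff (frobPow p m i x ^ (p - 1)) =
        (x.coeff 0) ^ ((p - 1) * p ^ i) := by
      intro i
      rw [map_pow]
      change ((frobPow p m i x).coeff 0) ^ _ = _
      rw [frobPow_coeff, ← pow_mul, mul_comm]
    simp only [e]
    rw [Finset.prod_pow_eq_pow_sum, ← Finset.mul_sum]
    have hg : (p - 1) * ∑ i ∈ Finset.range m, p ^ i = p ^ m - 1 := by
      rw [mul_comm, Nat.geomSum_eq (Fact.out : p.Prime).two_le,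
        Nat.div_mul_cancel (Nat.sub_one_dvd_pow_sub_one p m)]
    have : Fintype (GaloisField p m) := Fintype.ofFinite _
    rw [hg, ← GaloisField.card p m har, Nat.card_eq_fintype_card,
      FiniteField.pow_card_sub_one_eq_one _ h]

lemma mem_span_of_map {r : ℕ} (ι : Fq p a →+* GaloisField p (a * r)) (lam : ℕ) (x : Zq p a)
    (h : (p : Zq p (a * r)) ^ lam ∣ WittVector.map ι x) :
    x ∈ Ideal.span {(p : Zq p a) ^ lam} := by
  rw [← Ideal.mem_span_singleton, WittVector.mem_span_p_pow_iff_le_coeff_eq_zero] at h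
  rw [WittVector.mem_span_p_pow_iff_le_coeff_eq_zero]
  intro m hm
  have := h m hm
  rw [WittVector.map_coeff] at this
  exact (map_eq_zero ι).1 this

variable (p a n)

/-- Harvey's trace formula (Theorem 3.1 of the paper): with the above notation, and with
`F ∈ ℤ_q[x^±]` any lift of `F̄` (coefficientwise reduction modulo `p`, i.e. the zeroth
Witt component, recovers `F̄`) with `Δ(F) ⊆ K`, and positive integers `r, λ, τ` with
`τ(p−1)ar ≥ λ`, one has
`N ≡ (q^r−1)^n Σ_{s=0}^{λ+τ−1} α_s · tr(Φ_s^r) (mod p^λ)` in `ℤ_q`. -/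
theorem trace_formula (ha : 1 ≤ a) (hn : 1 ≤ n) (S : Finset (Fin n → ℤ))
    (Fbar : AddMonoidAlgebra (Fq p a) (Fin n → ℤ)) (hFbar : Fbar ≠ 0)
    (hΔbar : newton Fbar ⊆ convexHull ℝ (emb n '' (S : Set (Fin n → ℤ))))
    (F : LP p a n)
    (hlift : ∀ u : Fin n → ℤ, (F.coeff u).coeff 0 = Fbar.coeff u)
    (hΔ : newton F ⊆ convexHull ℝ (emb n '' (S : Set (Fin n → ℤ))))
    (r lam tau : ℕ) (hr : 1 ≤ r) (hlam : 1 ≤ lam) (htau : 1 ≤ tau)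
    (hbound : lam ≤ tau * (p - 1) * a * r)
    (ι : Fq p a →+* GaloisField p (a * r))
    (B : ℕ → Finset (Fin n → ℤ))
    (hB : ∀ s : ℕ, ∀ u : Fin n → ℤ,
      u ∈ B s ↔ emb n u ∈ (s : ℝ) • convexHull ℝ (emb n '' (S : Set (Fin n → ℤ)))) :
    ((Npoints p a n r ι Fbar : Zq p a) -
        (((p ^ a) ^ r - 1 : ℕ) : Zq p a) ^ n *
          ∑ s ∈ Finset.range (lam + tau),
            (α lam tau s : Zq p a) *
              Matrix.trace ((Φmat p a n (B s) (Ms p a n F s (B s))) ^ r)) ∈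
      Ideal.span {(p : Zq p a) ^ lam} := by
  classical
  have har : a * r ≠ 0 := Nat.mul_ne_zero (by omega) (by omega)
  set K := convexHull ℝ (emb n '' (S : Set (Fin n → ℤ))) with hKdef
  have hK : Convex ℝ K := convex_convexHull ℝ _
  have hne : K.Nonempty := by
    have : ∃ u, Fbar.coeff u ≠ 0 := by
      by_contra! h
      apply hFbar
      ext u
      simpa using h u
    obtain ⟨u, hu⟩ := this
    exact ⟨emb n u, hΔbar (subset_convexHull ℝ _ ⟨u, hu, rfl⟩)⟩
  have hF : InK p a n K 1 F := by
    intro u hu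
    rw [one_smul]
    exact hΔ (subset_convexHull ℝ _ ⟨u, hu, rfl⟩)
  have : Fintype (GaloisField p (a * r)) := Fintype.ofFinite _
  have : Fintype (GaloisField p (a * r))ˣ := Fintype.ofFinite _
  have hH : ∀ s : ℕ, InK p a n K (((p - 1) * s : ℕ) : ℝ) (F ^ ((p - 1) * s)) := by
    intro s
    simpa using hF.pow hK hne zero_le_one ((p - 1) * s)
  have htr : ∀ s : ℕ, (((p ^ a) ^ r - 1 : ℕ) : Zq p (a * r)) ^ n *
      WittVector.map ι (Matrix.trace ((Φmat p a n (B s) (Ms p a n F s (B s))) ^ r)) =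
      ∑ c : Fin n → (GaloisField p (a * r))ˣ,
        (∏ i ∈ Finset.range (a * r), frobPow p (a * r) i (ev ι c F) ^ (p - 1)) ^ s := by
    intro s
    rw [Φmat_pow ha, trace_EE hK hne (hH s) (B s) (hB s) (Ms p a n F s (B s)) (fun _ _ => rfl), ← pow_mul,
      ← sum_ev ι har]
    · apply Finset.sum_congr rfl
      intro c _
      rw [ev_PP, ← Finset.prod_pow]
      apply Finset.prod_congr rfl
      intro i _
      rw [map_pow, map_pow, pow_mul]
    · intro u hu
      rw [hB]
      have h1 := InK.PP hK hne (hH s) (a * r) _ hu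
      have h2 : (0 : ℝ) < (p : ℝ) ^ (a * r) - 1 := by
        have : (1 : ℝ) < (p : ℝ) ^ (a * r) :=
          one_lt_pow₀ (by exact_mod_cast (Fact.out : p.Prime).one_lt) har
        linarith
      rw [emb_zsmul, mul_smul] at h1
      push_cast at h1
      exact (Set.smul_mem_smul_set_iff₀ h2.ne' _ _).1 h1
  apply mem_span_of_map ι
  rw [map_sub, map_mul, map_pow, map_natCast, map_natCast, map_sum, Finset.mul_sum, Npoints_eq]
  simp only [map_mul, map_intCast]
  have e : ∀ s : ℕ, (((p ^ a) ^ r - 1 : ℕ) : Zq p (a * r)) ^ n * ((α lam tau s : Zq p (a * r)) *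
      WittVector.map ι (Matrix.trace ((Φmat p a n (B s) (Ms p a n F s (B s))) ^ r))) =
      ∑ c : Fin n → (GaloisField p (a * r))ˣ, (α lam tau s : Zq p (a * r)) *
        (∏ i ∈ Finset.range (a * r), frobPow p (a * r) i (ev ι c F) ^ (p - 1)) ^ s := by
    intro s
    rw [← Finset.mul_sum, ← htr s]
    exact mul_left_comm _ _ _
  rw [Finset.sum_congr rfl (fun s _ => e s), Finset.sum_comm]
  push_cast
  rw [← Finset.sum_sub_distrib]
  apply Finset.dvd_sum
  intro c _
  have := y_dvd lam tau hlam har (by rw [← mul_assoc]; exact hbound) (ev ι c F)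
  simpa only [constCoeff_ev ι c F Fbar hlift] using this
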